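/- For every natural number m ≥ 0, the integral ∫_{0}^{1} log(1/w − 1) · w^m dw equals −H(m) / (m+1). -/

import Mathlib

open Real MeasureTheory

/-- The `m`-th harmonic number `H(m) = ∑_{i=1}^{m} 1/i`, with `H(0) = 0`. -/
noncomputable def H (m : ℕ) : ℝ := ∑ i ∈ Finset.range m, (1 : ℝ) / (i + 1)

/-!
Almost everywhere, `log (1 / w - 1) = log |w - 1| - log |w|`, so the integral is a difference of two
moments of `log |w - c|`, with `c = 1` and `c = 0`. A single elementary antiderivative, continuous
across the singularity, computes both.
-/

/-- The antiderivative of `x ↦ x ^ m * log (x - c)` obtained by integrating by parts. It is valid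
on both sides of `c` because `Real.log y = log |y|`, and the constant of integration `c ^ (m + 1)`
is chosen to make it continuous at `c`. -/
noncomputable def powMulLogPrimitive (m : ℕ) (c x : ℝ) : ℝ :=
  ((x ^ (m + 1) - c ^ (m + 1)) * log (x - c)
    - ∑ i ∈ Finset.range (m + 1), x ^ (i + 1) / (i + 1) * c ^ (m - i)) / (m + 1)

lemma continuous_pow_sub_pow_mul_log (n : ℕ) (c : ℝ) :
    Continuous fun x : ℝ ↦ (x ^ n - c ^ n) * log (x - c) := by
  have h_log : Continuous fun x : ℝ ↦ (x - c) * log (x - c) :=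
    continuous_mul_log.comp (continuous_sub_right c)
  simp only [← geom_sum₂_mul _ c n, mul_assoc]
  exact Continuous.mul (by fun_prop) h_log

lemma continuous_powMulLogPrimitive (m : ℕ) (c : ℝ) : Continuous (powMulLogPrimitive m c) := by
  unfold powMulLogPrimitive
  exact ((continuous_pow_sub_pow_mul_log (m + 1) c).sub (by fun_prop)).div_const _

lemma hasDerivAt_sum_pow_div_mul_pow (m : ℕ) (c x : ℝ) :
    HasDerivAt (fun y : ℝ ↦ ∑ i ∈ Finset.range (m + 1), y ^ (i + 1) / (i + 1) * c ^ (m - i))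
      (∑ i ∈ Finset.range (m + 1), x ^ i * c ^ (m - i)) x := by
  refine HasDerivAt.fun_sum fun i _ ↦ ?_
  have hi : (i : ℝ) + 1 ≠ 0 := by positivity
  refine (((hasDerivAt_pow (i + 1) x).div_const ((i : ℝ) + 1)).mul_const _).congr_deriv ?_
  rw [Nat.add_sub_cancel, Nat.cast_add_one, mul_div_cancel_left₀ _ hi]

lemma hasDerivAt_powMulLogPrimitive (m : ℕ) {c x : ℝ} (hx : x ≠ c) :
    HasDerivAt (powMulLogPrimitive m c) (x ^ m * log (x - c)) x := by
  have hxc : x - c ≠ 0 := sub_ne_zero.2 hx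
  have h_geom : ∑ i ∈ Finset.range (m + 1), x ^ i * c ^ (m - i) =
      (x ^ (m + 1) - c ^ (m + 1)) * (1 / (x - c)) := by
    rw [← geom_sum₂_mul, mul_assoc, mul_one_div_cancel hxc, mul_one, Nat.add_sub_cancel]
  have h_log : HasDerivAt (fun y : ℝ ↦ log (y - c)) (1 / (x - c)) x :=
    ((hasDerivAt_id x).sub_const c).log hxc
  have h_pow : HasDerivAt (fun y : ℝ ↦ y ^ (m + 1) - c ^ (m + 1)) ((m + 1) * x ^ m) x := by
    simpa using (hasDerivAt_pow (m + 1) x).sub_const (c ^ (m + 1))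
  refine (((h_pow.mul h_log).sub (hasDerivAt_sum_pow_div_mul_pow m c x)).div_const
    ((m : ℝ) + 1)).congr_deriv ?_
  have hm : (m : ℝ) + 1 ≠ 0 := by positivity
  rw [h_geom, add_sub_cancel_right, mul_assoc, mul_div_cancel_left₀ _ hm]

lemma intervalIntegrable_pow_mul_log_sub (m : ℕ) (a b c : ℝ) :
    IntervalIntegrable (fun x ↦ x ^ m * log (x - c)) volume a b := by
  have h_log : IntervalIntegrable (fun x ↦ log (x - c)) volume a b := by
    have h := intervalIntegral.intervalIntegrable_log' (a := a - c) (b := b - c)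
    simpa only [sub_add_cancel] using h.comp_sub_right c
  exact h_log.continuousOn_mul (by fun_prop)

theorem integral_pow_mul_log_sub (m : ℕ) (a b c : ℝ) :
    ∫ x in a..b, x ^ m * log (x - c) = powMulLogPrimitive m c b - powMulLogPrimitive m c a :=
  integral_eq_of_hasDerivAt_off_countable _ _ (Set.countable_singleton c)
    (continuous_powMulLogPrimitive m c).continuousOn
    (fun _ hx ↦ hasDerivAt_powMulLogPrimitive m hx.2)
    (intervalIntegrable_pow_mul_log_sub m a b c)

lemma powMulLogPrimitive_zero (m : ℕ) (x : ℝ) :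
    powMulLogPrimitive m 0 x = x ^ (m + 1) * (log x - 1 / (m + 1)) / (m + 1) := by
  have h_sum : ∑ i ∈ Finset.range (m + 1), x ^ (i + 1) / (i + 1) * 0 ^ (m - i) =
      x ^ (m + 1) / ((m : ℝ) + 1) := by
    rw [Finset.sum_range_succ, Finset.sum_eq_zero fun i hi ↦ ?_]
    · simp
    · rw [zero_pow (Nat.sub_ne_zero_of_lt (Finset.mem_range.1 hi)), mul_zero]
  rw [powMulLogPrimitive, h_sum, zero_pow m.succ_ne_zero, sub_zero, sub_zero]
  ring

theorem integral_pow_mul_log_zero_one (m : ℕ) :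
    ∫ x in (0 : ℝ)..1, x ^ m * log x = -1 / ((m : ℝ) + 1) ^ 2 := by
  have h := integral_pow_mul_log_sub m 0 1 0
  simp only [sub_zero, powMulLogPrimitive_zero, one_pow, log_one, zero_pow m.succ_ne_zero] at h
  rw [h]
  field_simp
  ring

theorem integral_pow_mul_log_sub_one_zero_one (m : ℕ) :
    ∫ x in (0 : ℝ)..1, x ^ m * log (x - 1) = -H (m + 1) / (m + 1) := by
  simp [integral_pow_mul_log_sub, powMulLogPrimitive, H]

lemma H_succ (m : ℕ) : H (m + 1) = H m + 1 / (m + 1) := Finset.sum_range_succ _ m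

lemma log_one_div_sub_one {x : ℝ} (h0 : x ≠ 0) (h1 : x ≠ 1) :
    log (1 / x - 1) = log (x - 1) - log x := by
  have h_frac : 1 / x - 1 = (1 - x) / x := by rw [sub_div, div_self h0]
  rw [h_frac, log_div (sub_ne_zero.2 h1.symm) h0, ← neg_sub x 1, log_neg_eq_log]

/-- For every natural number `m`, `∫_{0}^{1} log(1/w − 1) · w^m dw = −H(m) / (m+1)`. -/
theorem integral_log_inv_sub_one_mul_pow (m : ℕ) :
    (∫ w in Set.Ioo (0 : ℝ) 1, Real.log (1 / w - 1) * w ^ m) =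
      -H m / ((m : ℝ) + 1) := by
  have h_split : ∀ w ∈ Set.Ioo (0 : ℝ) 1,
      log (1 / w - 1) * w ^ m = w ^ m * log (w - 1) - w ^ m * log w := fun w hw ↦ by
    rw [log_one_div_sub_one hw.1.ne' hw.2.ne, mul_comm, mul_sub]
  have h_int : IntervalIntegrable (fun w ↦ w ^ m * log w) volume 0 1 := by
    simpa using intervalIntegrable_pow_mul_log_sub m 0 1 0
  calc ∫ w in Set.Ioo (0 : ℝ) 1, log (1 / w - 1) * w ^ m
      = ∫ w in (0 : ℝ)..1, (w ^ m * log (w - 1) - w ^ m * log w) := by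
        rw [setIntegral_congr_fun measurableSet_Ioo h_split, ← integral_Ioc_eq_integral_Ioo,
          ← intervalIntegral.integral_of_le zero_le_one]
    _ = -H (m + 1) / (m + 1) - -1 / ((m : ℝ) + 1) ^ 2 := by
        rw [intervalIntegral.integral_sub (intervalIntegrable_pow_mul_log_sub m 0 1 1) h_int,
          integral_pow_mul_log_sub_one_zero_one, integral_pow_mul_log_zero_one]
    _ = -H m / (m + 1) := by
        rw [H_succ]
        field_simp
        ring
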